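/- arXiv:1704.03702 — 4 statements merged into one kernel-verified Lean document; each statement's English description precedes it below -/
import Mathlib

section
/- Let 𝕐 ⊆ 𝕏 be a maximal p_j-subscheme. Then for every nonzero homogeneous element f ∈ (I_{𝕐/𝕏})_i with i ≥ α_{𝕐/𝕏}, one has I_{𝕐/𝕏} = ⟨f⟩_R^sat, where ⟨f⟩_R^sat = {g ∈ R | 𝔪^k·g ⊆ ⟨f⟩_R for some k ≥ 0} is the saturation of the principal ideal ⟨f⟩_R. -/
noncomputable section

/-! An algebraic model for a 0-dimensional subscheme `𝕏 ⊆ ℙⁿ_K` whose support avoids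
the hyperplane `Z(X₀)`.  The scheme is recorded through the local rings
`𝒪_{𝕏,p_j}` at the points `p_1, …, p_s` of its support, together with the germ map
sending a homogeneous polynomial `F` of degree `i` to the tuple of germs
`(F_{p_1}, …, F_{p_s})`; this is the degree-`i` component of the injection
`ĩ : R → Q^h(R) ≅ ∏_j 𝒪_{𝕏,p_j}[T_j, T_j⁻¹]`, where every graded component of
`Q^h(R)` is identified with `Γ = ∏_j 𝒪_{𝕏,p_j}` by dropping the powers of the `T_j`.
Since `x₀` has germ `1` at every point, the homogeneous coordinate ring
`R = P/I_𝕏` is faithfully encoded by the chain of subspaces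
`R_i ≅ V_i = germ(P_i) ⊆ Γ` (with `V_i ⊆ V_{i+1}`, and `V_i = Γ` for `i ≫ 0`). -/

/-- The data of one (fat) point of a 0-dimensional scheme: a finite local `K`-algebra. -/
structure PointData (K : Type) [Field K] : Type 1 where
  carrier : Type
  [ring : CommRing carrier]
  [alg : Algebra K carrier]
  [loc : IsLocalRing carrier]
  [findim : FiniteDimensional K carrier]

attribute [instance] PointData.ring PointData.alg PointData.loc PointData.findim

/-- A model of a 0-dimensional subscheme of `ℙⁿ_K`, no point of whose support lies
on `Z(X₀)` (coordinates being chosen so that each point has `X₀`-coordinate 1, the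
germ of `x₀` at every point is `1`). -/
structure ZeroDimScheme (K : Type) [Field K] (n : ℕ) : Type 1 where
  /-- the number of points in the support -/
  s : ℕ
  spos : 0 < s
  /-- the local rings `𝒪_{𝕏,p_j}` -/
  pt : Fin s → PointData K
  /-- the germ map: for `F` homogeneous of degree `i` this is the degree-`i`
  component of `ĩ : R → Q^h(R)`, i.e. `F ↦ (F_{p_1}, …, F_{p_s})` -/
  germ : MvPolynomial (Fin (n + 1)) K →ₐ[K] ∀ j, (pt j).carrier
  /-- the germ of `X₀` at each point is `1` -/
  germ_X0 : germ (MvPolynomial.X 0) = 1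
  /-- in all large degrees, the germ map is surjective onto `∏_j 𝒪_{𝕏,p_j}`
  (this characterizes `I_𝕏` as the full homogeneous vanishing ideal of the scheme) -/
  eventually_surj : ∃ N : ℕ, ∀ i, N ≤ i →
    Submodule.map germ.toLinearMap
      (MvPolynomial.homogeneousSubmodule (Fin (n + 1)) K i) = ⊤

namespace ZeroDimScheme

variable {K : Type} [Field K] {n : ℕ}

/-- `Γ = ∏_j 𝒪_{𝕏,p_j}`, the common model for every graded component of `Q^h(R)`. -/
abbrev Gamma (S : ZeroDimScheme K n) : Type := ∀ j, (S.pt j).carrier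

variable (S : ZeroDimScheme K n)

/-- `V i ⊆ Γ` is the image of the degree-`i` component `R_i` of the homogeneous
coordinate ring `R` under (the degree-`i` component of) `ĩ`; we identify `R_i ≅ V i`. -/
def V (i : ℕ) : Submodule K S.Gamma :=
  Submodule.map S.germ.toLinearMap
    (MvPolynomial.homogeneousSubmodule (Fin (n + 1)) K i)

/-- `R_i` for `i : ℤ` (zero in negative degrees). -/
def Vz (i : ℤ) : Submodule K S.Gamma := if 0 ≤ i then S.V i.toNat else ⊥

/-- `deg 𝕏 = Σ_j dim_K 𝒪_{𝕏,p_j}`. -/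
def degX : ℕ := Module.finrank K S.Gamma

/-- The Hilbert function `HF_𝕏(i) = dim_K R_i`. -/
def HF (i : ℕ) : ℕ := Module.finrank K (S.V i)

/-- The Hilbert function on `ℤ`. -/
def HFz (i : ℤ) : ℕ := Module.finrank K (S.Vz i)

/-- The regularity index `r_𝕏`: the least `r` with `HF_𝕏(i) = deg 𝕏` for all `i ≥ r`. -/
def rX : ℕ := sInf {r : ℕ | ∀ i, r ≤ i → S.HF i = S.degX}

/-- `κ_j = dim_K κ(p_j)`, the residue field of `𝕏` at `p_j`. -/
def kappa (j : Fin S.s) : ℕ :=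
  Module.finrank K
    ((S.pt j).carrier ⧸
      Submodule.restrictScalars K (IsLocalRing.maximalIdeal (S.pt j).carrier))

/-- `sj` is a socle element of `𝒪_{𝕏,p_j}`, i.e. `sj ∈ Ann(𝔪_{𝕏,p_j})`.  By
Proposition 1.2, the maximal `p_j`-subschemes `𝕐 ⊆ 𝕏` correspond 1-1 to the ideals
of `Γ` generated by `(0,…,0,sj,0,…,0)` with `sj` a *nonzero* socle element. -/
def IsSocle (j : Fin S.s) (sj : (S.pt j).carrier) : Prop :=
  ∀ b ∈ IsLocalRing.maximalIdeal (S.pt j).carrier, sj * b = 0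

/-- The ideal `U = ⟨(0,…,0,sj,0,…,0)⟩` of `Γ` corresponding to the maximal
`p_j`-subscheme `𝕐` determined by the socle element `sj`; one has `I_{𝕐/𝕏} = ĩ⁻¹(U)`. -/
def sepIdeal (j : Fin S.s) (sj : (S.pt j).carrier) : Submodule K S.Gamma :=
  Submodule.restrictScalars K (Ideal.span {(Pi.single j sj : S.Gamma)})

/-- The degree-`i` component `(I_{𝕐/𝕏})_i = R_i ∩ ĩ⁻¹(U)` of the ideal of the maximal
`p_j`-subscheme `𝕐` (given by the socle element `sj`) in `R`. -/
def IY (j : Fin S.s) (sj : (S.pt j).carrier) (i : ℕ) : Submodule K S.Gamma :=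
  S.V i ⊓ S.sepIdeal j sj

/-- `(I_{𝕐/𝕏})_i` for `i : ℤ`. -/
def IYz (j : Fin S.s) (sj : (S.pt j).carrier) (i : ℤ) : Submodule K S.Gamma :=
  S.Vz i ⊓ S.sepIdeal j sj

/-- The Hilbert function `HF_𝕐(i) = HF_𝕏(i) - dim_K (I_{𝕐/𝕏})_i` of the maximal
`p_j`-subscheme `𝕐` given by the socle element `sj`. -/
def HFY (j : Fin S.s) (sj : (S.pt j).carrier) (i : ℕ) : ℕ :=
  S.HF i - Module.finrank K (S.IY j sj i)

/-- `HF_𝕐` on `ℤ`. -/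
def HFYz (j : Fin S.s) (sj : (S.pt j).carrier) (i : ℤ) : ℕ :=
  S.HFz i - Module.finrank K (S.IYz j sj i)

/-- `α_{𝕐/𝕏} = min {i | (I_{𝕐/𝕏})_i ≠ 0}`. -/
def alphaY (j : Fin S.s) (sj : (S.pt j).carrier) : ℕ :=
  sInf {i : ℕ | S.IY j sj i ≠ ⊥}

/-- `μ(a) = min {i | (0,…,0,a T_j^i,0,…,0) ∈ ĩ(R)}` for `a ∈ 𝒪_{𝕏,p_j}`. -/
def mu (j : Fin S.s) (a : (S.pt j).carrier) : ℕ :=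
  sInf {i : ℕ | (Pi.single j a : S.Gamma) ∈ S.V i}

/-- `μ_{𝕐/𝕏}`, the maximal degree of a minimal separator of the maximal
`p_j`-subscheme `𝕐` given by the socle element `sj`; independently of all choices it
equals `max {μ(a·sj) | a ∈ 𝒪_{𝕏,p_j}, a·sj ≠ 0}`. -/
def muY (j : Fin S.s) (sj : (S.pt j).carrier) : ℕ :=
  sSup {m : ℕ | ∃ a : (S.pt j).carrier, a * sj ≠ 0 ∧ m = S.mu j (a * sj)}

/-- `deg_𝕏(p_j) = min {μ_{𝕐/𝕏} | 𝕐 a maximal p_j-subscheme of 𝕏}`. -/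
def degP (j : Fin S.s) : ℕ :=
  sInf {m : ℕ | ∃ sj : (S.pt j).carrier, S.IsSocle j sj ∧ sj ≠ 0 ∧ m = S.muY j sj}

/-- `𝕏` has the Cayley–Bacharach property of degree `d`: `deg_𝕏(p_j) ≥ d + 1` for all `j`. -/
def CBP (d : ℕ) : Prop := ∀ j : Fin S.s, d + 1 ≤ S.degP j

/-- `𝕏` is a Cayley–Bacharach scheme: it has `CBP(r_𝕏 - 1)`. -/
def CayleyBacharach : Prop := S.CBP (S.rX - 1)

/-- The residue class map `𝒪_{𝕏,p_j} → κ(p_j)` as a `K`-linear map. -/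
def resQ (j : Fin S.s) :
    (S.pt j).carrier →ₗ[K]
      ((S.pt j).carrier ⧸
        Submodule.restrictScalars K (IsLocalRing.maximalIdeal (S.pt j).carrier)) :=
  (Submodule.restrictScalars K (IsLocalRing.maximalIdeal (S.pt j).carrier)).mkQ

/-- The residue classes of `e 0, …, e (κ_j - 1)` form a `K`-basis of `κ(p_j)`. -/
def IsResidueBasis (j : Fin S.s) {m : ℕ} (e : Fin m → (S.pt j).carrier) : Prop :=
  LinearIndependent K (fun k => S.resQ j (e k)) ∧
    Submodule.span K (Set.range fun k => S.resQ j (e k)) = ⊤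

/-- A family `τ_j : 𝒪_{𝕏,p_j} → K` of trace maps: each `τ_j` is a generator of
`Hom_K(𝒪_{𝕏,p_j}, K)` as an `𝒪_{𝕏,p_j}`-module.  Such a family exists iff `𝕏` is
locally Gorenstein, and it induces a homogeneous trace map `σ` of degree zero of
`Q^h(R)/L₀` (componentwise). -/
def IsTraceFamily (τ : ∀ j, (S.pt j).carrier →ₗ[K] K) : Prop :=
  ∀ j, Function.Bijective
    (fun a : (S.pt j).carrier => (τ j).comp (LinearMap.mulRight K a))

/-- The total trace `Γ → K`, `y ↦ Σ_j τ_j (y_j)`; on the degree-`i` component of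
`Q^h(R)` the trace map `σ` is `q ↦ (Ttot τ q)·x₀^i`. -/
def Ttot (τ : ∀ j, (S.pt j).carrier →ₗ[K] K) : S.Gamma →ₗ[K] K :=
  ∑ j : Fin S.s, (τ j).comp (LinearMap.proj j)

/-- The degree-`k` component `(𝔠^σ_𝕏)_k ⊆ Q^h(R)_k ≅ Γ` of the Dedekind complementary
module: `g ∈ (𝔠^σ_𝕏)_k` iff `σ(g · R) ⊆ K[x₀]`, i.e. `Ttot τ (g·x) = 0` whenever
`x ∈ R_i` with `k + i < 0`. -/
def Cmod (τ : ∀ j, (S.pt j).carrier →ₗ[K] K) (k : ℤ) : Submodule K S.Gamma :=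
  ⨅ (i : ℕ) (_ : k + (i : ℤ) < 0) (x : S.Gamma) (_ : x ∈ S.V i),
    LinearMap.ker ((S.Ttot τ).comp (LinearMap.mulRight K x))

/-- The degree-`i` component `(δ^σ_𝕏)_i ⊆ Q^h(R)_i ≅ Γ` of the Dedekind different
`δ^σ_𝕏 = {f ∈ Q^h(R) | f · 𝔠^σ_𝕏 ⊆ R}`. -/
def delta (τ : ∀ j, (S.pt j).carrier →ₗ[K] K) (i : ℤ) : Submodule K S.Gamma :=
  ⨅ (k : ℤ) (g : S.Gamma) (_ : g ∈ S.Cmod τ k),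
    Submodule.comap (LinearMap.mulRight K g) (S.Vz (i + k))

/-- The Hilbert function of the Dedekind different. -/
def HFdelta (τ : ∀ j, (S.pt j).carrier →ₗ[K] K) (i : ℤ) : ℕ :=
  Module.finrank K (S.delta τ i)

/-- `𝕏` has minimal Dedekind different: `δ^σ_𝕏 = ⊕_{i ≥ 2 r_𝕏} R_i`
(recall `R_i ≅ Γ` for `i ≥ r_𝕏`). -/
def MinimalDedekind (τ : ∀ j, (S.pt j).carrier →ₗ[K] K) : Prop :=
  ∀ i : ℤ, S.delta τ i = if 2 * (S.rX : ℤ) ≤ i then ⊤ else ⊥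

/-- The degree-`i` component (`i ≥ 0`) of the conductor
`𝔉_{R̃/R} = {f ∈ R̃ | f·R̃ ⊆ R}` of `R` in `R̃ = ∏_j 𝒪_{𝕏,p_j}[T_j]`
(whose degree-`i` component is all of `Γ` for every `i ≥ 0`). -/
def cond (i : ℕ) : Submodule K S.Gamma :=
  ⨅ y : S.Gamma, Submodule.comap (LinearMap.mulRight K y) (S.V i)

/-- The conductor on `ℤ` (zero in negative degrees, where `R̃` vanishes). -/
def condZ (i : ℤ) : Submodule K S.Gamma := if 0 ≤ i then S.cond i.toNat else ⊥

/-- The degree-`i` component of the trace `tr(𝔠^σ_𝕏) = δ^σ_𝕏 · 𝔠^σ_𝕏` of the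
Dedekind complementary module. -/
def trC (τ : ∀ j, (S.pt j).carrier →ₗ[K] K) (i : ℤ) : Submodule K S.Gamma :=
  ⨆ (a : ℤ) (b : ℤ) (_ : a + b = i), S.delta τ a * S.Cmod τ b

/-- `𝕏` is nearly Gorenstein: `𝔪 ⊆ tr(𝔠^σ_𝕏)`. -/
def NearlyGorenstein (τ : ∀ j, (S.pt j).carrier →ₗ[K] K) : Prop :=
  ∀ i : ℤ, 1 ≤ i → S.Vz i ≤ S.trC τ i

/-- `𝕏` is almost Gorenstein: there is an exact sequence of graded `R`-modules
`0 → R → 𝔠^σ_𝕏(-r_𝕏) → C → 0` with `𝔪·C = 0`.  A degree-zero graded injection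
`R → 𝔠^σ_𝕏(-r_𝕏)` is multiplication by an element `g ∈ (𝔠^σ_𝕏)_{-r_𝕏}` with
`Ann_R(g) = 0`, and `𝔪·C = 0` means `𝔪 · 𝔠^σ_𝕏(-r_𝕏) ⊆ g·R`. -/
def AlmostGorenstein (τ : ∀ j, (S.pt j).carrier →ₗ[K] K) : Prop :=
  ∃ g ∈ S.Cmod τ (-(S.rX : ℤ)),
    (∀ i : ℕ, ∀ x ∈ S.V i, x * g = 0 → x = 0) ∧
    (∀ a : ℕ, 1 ≤ a → ∀ x ∈ S.V a, ∀ k : ℤ, ∀ h ∈ S.Cmod τ k,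
      x * h ∈ Submodule.map (LinearMap.mulRight K g) (S.Vz ((a : ℤ) + k + (S.rX : ℤ))))

/-- `𝕏` is arithmetically Gorenstein, i.e. `R` is a Gorenstein ring; equivalently the
canonical module is free of rank one: `𝔠^σ_𝕏 = g·R` for some `g ∈ (𝔠^σ_𝕏)_{-r_𝕏}`. -/
def ArithGorenstein (τ : ∀ j, (S.pt j).carrier →ₗ[K] K) : Prop :=
  ∃ g ∈ S.Cmod τ (-(S.rX : ℤ)),
    ∀ k : ℤ, S.Cmod τ k = Submodule.map (LinearMap.mulRight K g) (S.Vz (k + (S.rX : ℤ)))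

/-- `𝕏` is level: the socle of `R̄ = R/⟨x₀⟩` equals `R̄_{r_𝕏}`, i.e. no nonzero
homogeneous element of `R̄` of degree `< r_𝕏` is annihilated by `𝔪̄` (recall
`R̄_i ≅ V i / V (i-1)` and `x₀`-multiplication preserves germs). -/
def Level : Prop :=
  ∀ i : ℕ, i < S.rX → ∀ x ∈ S.V i,
    (∀ a : ℕ, 1 ≤ a → ∀ y ∈ S.V a, x * y ∈ S.Vz ((i : ℤ) + (a : ℤ) - 1)) →
      x ∈ S.Vz ((i : ℤ) - 1)

/-- The subspace `{x ∈ Γ | x_k = 0 for k ≠ j}` of `Γ`: the degreewise model for the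
ideal of the subscheme `𝕐_j ⊆ 𝕏` with `I_{𝕐_j} = ∩_{k ≠ j} I_k`. -/
def Wj (j : Fin S.s) : Submodule K S.Gamma :=
  ⨅ (k : Fin S.s) (_ : k ≠ j),
    LinearMap.ker (LinearMap.proj k : S.Gamma →ₗ[K] (S.pt k).carrier)

/-- `(I_{𝕐_j/𝕏})_i` for the subscheme `𝕐_j` complementary to `p_j`. -/
def IW (j : Fin S.s) (i : ℕ) : Submodule K S.Gamma := S.V i ⊓ S.Wj j

/-- The Hilbert function of the subscheme `𝕐_j` complementary to `p_j`. -/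
def HFW (j : Fin S.s) (i : ℕ) : ℕ := S.HF i - Module.finrank K (S.IW j i)

/-- `α_{𝕐_j/𝕏}` for the subscheme `𝕐_j` complementary to `p_j`. -/
def alphaW (j : Fin S.s) : ℕ := sInf {i : ℕ | S.IW j i ≠ ⊥}

/-- The subspace `{x ∈ Γ | x_k = 0 for k ∉ {j₁, j₂}}` of `Γ`: the degreewise model for
the ideal in `R` of the subscheme of the reduced scheme `𝕏` complementary to `{p_{j₁}, p_{j₂}}`. -/
def Wpair (j1 j2 : Fin S.s) : Submodule K S.Gamma :=
  ⨅ (k : Fin S.s) (_ : k ≠ j1) (_ : k ≠ j2),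
    LinearMap.ker (LinearMap.proj k : S.Gamma →ₗ[K] (S.pt k).carrier)

/-- The homogeneous vanishing ideal `I_𝕏 ⊆ P`. -/
def IX : Ideal (MvPolynomial (Fin (n + 1)) K) :=
  Ideal.span {F | (∃ i : ℕ, F ∈ MvPolynomial.homogeneousSubmodule (Fin (n + 1)) K i) ∧
    S.germ F = 0}

/-- The `n×n`-minor (Jacobian determinant with respect to `X_1, …, X_n`) of an
`n`-tuple of polynomials. -/
def jacMinor (Fs : Fin n → MvPolynomial (Fin (n + 1)) K) : MvPolynomial (Fin (n + 1)) K :=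
  Matrix.det (Matrix.of fun a b : Fin n => MvPolynomial.pderiv (Fin.succ b) (Fs a))

/-- The preimage in `P` of the Kähler different `ϑ_𝕏 ⊆ R`: the ideal generated by
`I_𝕏` together with all `n×n` minors of the Jacobian matrix of elements of `I_𝕏`. -/
def KaehlerIdeal : Ideal (MvPolynomial (Fin (n + 1)) K) :=
  S.IX ⊔ Ideal.span {m | ∃ Fs : Fin n → MvPolynomial (Fin (n + 1)) K,
    (∀ a, Fs a ∈ S.IX) ∧ m = jacMinor Fs}

/-- The degree-`i` component of the Kähler different `ϑ_𝕏 ⊆ R`, viewed inside `Γ`. -/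
def thetaPiece (i : ℕ) : Submodule K S.Gamma :=
  Submodule.map S.germ.toLinearMap
    (Submodule.restrictScalars K S.KaehlerIdeal ⊓
      MvPolynomial.homogeneousSubmodule (Fin (n + 1)) K i)

end ZeroDimScheme

end
theorem aux_span {K : Type} [Field K] {n : ℕ} (S : ZeroDimScheme K n)
    (j : Fin S.s) (sj : (S.pt j).carrier) (hsoc : S.IsSocle j sj)
    (f : S.Gamma) (hf : f ∈ S.sepIdeal j sj) (hf0 : f ≠ 0) :
    ∃ d : S.Gamma, (Pi.single j sj : S.Gamma) = d * f := by
  have hf' : f ∈ Ideal.span {(Pi.single j sj : S.Gamma)} := hf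
  obtain ⟨c, rfl⟩ := Ideal.mem_span_singleton'.1 hf'
  have hu : IsUnit (c j) := by
    by_contra h
    apply hf0
    have h1 := hsoc (c j) ((IsLocalRing.mem_maximalIdeal _).2 h)
    funext k
    by_cases hk : k = j
    · subst hk
      simpa [mul_comm] using h1
    · simp [hk]
  obtain ⟨u, hu⟩ := hu
  refine ⟨Pi.single j (↑u⁻¹ : (S.pt j).carrier), ?_⟩
  funext k
  by_cases hk : k = j
  · subst hk
    simp [← hu]
  · simp [hk]

/-- Proposition 1.5(a).  Let `𝕐 ⊆ 𝕏` be a maximal `p_j`-subscheme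
(given by a nonzero socle element `sj`).  Then for every nonzero homogeneous
`f ∈ (I_{𝕐/𝕏})_i` with `i ≥ α_{𝕐/𝕏}`, one has `I_{𝕐/𝕏} = ⟨f⟩_R^sat`, where
`⟨f⟩_R^sat = {g ∈ R | 𝔪^k·g ⊆ ⟨f⟩_R for some k ≥ 0}`; degreewise (for `g` of
degree `m`, i.e. `x = ĩ(g) ∈ V m`) the saturation condition reads
`∃ k, ∀ a ≥ k, R_a · g ⊆ f·R_{a+m-i}`, since `(𝔪^k)_a = R_a` for `a ≥ k`. -/
theorem dedekind_CB_stmt0 (K : Type) [Field K] (n : ℕ) (S : ZeroDimScheme K n)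
    (j : Fin S.s) (sj : (S.pt j).carrier) (hsoc : S.IsSocle j sj) (hsj : sj ≠ 0)
    (i : ℕ) (hi : S.alphaY j sj ≤ i) (f : S.Gamma)
    (hf : f ∈ S.IY j sj i) (hf0 : f ≠ 0) :
    ∀ (m : ℕ) (x : S.Gamma),
      x ∈ S.IY j sj m ↔
        x ∈ S.V m ∧ ∃ k : ℕ, ∀ a : ℕ, k ≤ a → ∀ y ∈ S.V a,
          y * x ∈ Submodule.map (LinearMap.mulRight K f)
            (S.Vz ((a : ℤ) + (m : ℤ) - (i : ℤ))) := by
  intro m x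
  obtain ⟨N, hN⟩ := S.eventually_surj
  have hf' : f ∈ Ideal.span {(Pi.single j sj : S.Gamma)} := hf.2
  constructor
  · intro hx
    refine ⟨hx.1, N + i, fun a ha y _ => ?_⟩
    obtain ⟨d, hd⟩ := aux_span S j sj hsoc f hf.2 hf0
    have hx' : x ∈ Ideal.span {(Pi.single j sj : S.Gamma)} := hx.2
    obtain ⟨c, hc⟩ := Ideal.mem_span_singleton'.1 hx'
    refine ⟨y * (c * d), ?_, ?_⟩
    · have h0 : (0 : ℤ) ≤ (a : ℤ) + m - i := by omega
      have h1 : S.V ((a : ℤ) + m - i).toNat = ⊤ := hN _ (by omega)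
      simp only [ZeroDimScheme.Vz, if_pos h0, h1]
      trivial
    · rw [LinearMap.mulRight_apply, ← hc, hd]
      ring
  · rintro ⟨hx, k, hk⟩
    refine ⟨hx, ?_⟩
    have h1 : (1 : S.Gamma) ∈ S.V (max k N) := by
      have h2 : S.V (max k N) = ⊤ := hN _ (le_max_right _ _)
      rw [h2]; trivial
    obtain ⟨v, _, hv⟩ := hk _ (le_max_left k N) 1 h1
    rw [LinearMap.mulRight_apply, one_mul] at hv
    change x ∈ Ideal.span {(Pi.single j sj : S.Gamma)}
    rw [← hv]
    exact Ideal.mul_mem_left _ _ hf'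
end

section
/- Let 𝕐 ⊆ 𝕏 be a maximal p_j-subscheme. Then α_{𝕐/𝕏} ≤ μ_{𝕐/𝕏} ≤ r_𝕏, and the Hilbert function of 𝕐 satisfies: HF_𝕐(i) = HF_𝕏(i) for i < α_{𝕐/𝕏}; HF_𝕐(i) ≤ HF_𝕏(i) − 1 for α_{𝕐/𝕏} ≤ i < μ_{𝕐/𝕏}; and HF_𝕐(i) = HF_𝕏(i) − κ_j for i ≥ μ_{𝕐/𝕏}. -/
namespace ZeroDimScheme

theorem aux_V_mono {K : Type} [Field K] {n : ℕ} (S : ZeroDimScheme K n) : Monotone S.V := by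
  apply monotone_nat_of_le_succ
  intro i x hx
  obtain ⟨F, hF, rfl⟩ := hx
  refine ⟨F * MvPolynomial.X 0, ?_, ?_⟩
  · exact MvPolynomial.IsHomogeneous.mul hF (MvPolynomial.isHomogeneous_X K 0)
  · simp [S.germ_X0]

theorem aux_V_top {K : Type} [Field K] {n : ℕ} (S : ZeroDimScheme K n) {i : ℕ}
    (hi : S.rX ≤ i) : S.V i = ⊤ := by
  have hne : {r : ℕ | ∀ i, r ≤ i → S.HF i = S.degX}.Nonempty := by
    obtain ⟨N, hN⟩ := S.eventually_surj
    refine ⟨N, fun i hi => ?_⟩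
    have h : S.V i = ⊤ := hN i hi
    rw [HF, degX, h]
    exact finrank_top K S.Gamma
  have h := Nat.sInf_mem hne i hi
  exact Submodule.eq_top_of_finrank_eq h

theorem aux_mem_sep {K : Type} [Field K] {n : ℕ} (S : ZeroDimScheme K n)
    (j : Fin S.s) (sj : (S.pt j).carrier) (x : S.Gamma) :
    x ∈ S.sepIdeal j sj ↔ ∃ a : (S.pt j).carrier, Pi.single j (a * sj) = x := by
  simp only [sepIdeal, Submodule.restrictScalars_mem, Ideal.mem_span_singleton']
  constructor
  · rintro ⟨a, rfl⟩
    refine ⟨a j, ?_⟩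
    rw [Pi.single_mul_right]
  · rintro ⟨a, rfl⟩
    refine ⟨Pi.single j a, ?_⟩
    rw [Pi.single_mul]

theorem aux_finrank_sep {K : Type} [Field K] {n : ℕ} (S : ZeroDimScheme K n)
    (j : Fin S.s) (sj : (S.pt j).carrier) (hsoc : S.IsSocle j sj) (hsj : sj ≠ 0) :
    Module.finrank K (S.sepIdeal j sj) = S.kappa j := by
  let f : (S.pt j).carrier →ₗ[K] S.Gamma :=
    (LinearMap.single K (fun j => (S.pt j).carrier) j).comp (LinearMap.mulRight K sj)
  have hf : ∀ a, f a = Pi.single j (a * sj) := fun a => rfl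
  have hr : LinearMap.range f = S.sepIdeal j sj := by
    ext x
    rw [aux_mem_sep]
    rfl
  have hk : LinearMap.ker f =
      Submodule.restrictScalars K (IsLocalRing.maximalIdeal (S.pt j).carrier) := by
    ext a
    rw [LinearMap.mem_ker, hf, Pi.single_eq_zero_iff, Submodule.restrictScalars_mem]
    constructor
    · intro h
      by_contra hu
      have hu' : IsUnit a := by
        simpa [IsLocalRing.mem_maximalIdeal, mem_nonunits_iff] using hu
      exact hsj ((hu'.mul_right_eq_zero).1 h)
    · intro h
      rw [mul_comm]
      exact hsoc a h
  rw [kappa, ← hr, ← hk]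
  exact (LinearEquiv.finrank_eq f.quotKerEquivRange).symm

end ZeroDimScheme

/-- Proposition 1.5(b).  Let `𝕐 ⊆ 𝕏` be a maximal `p_j`-subscheme
(given by a nonzero socle element `sj`).  Then `α_{𝕐/𝕏} ≤ μ_{𝕐/𝕏} ≤ r_𝕏`, and the
Hilbert function of `𝕐` satisfies `HF_𝕐(i) = HF_𝕏(i)` for `i < α_{𝕐/𝕏}`,
`HF_𝕐(i) ≤ HF_𝕏(i) - 1` for `α_{𝕐/𝕏} ≤ i < μ_{𝕐/𝕏}`, and
`HF_𝕐(i) = HF_𝕏(i) - κ_j` for `i ≥ μ_{𝕐/𝕏}`. -/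
theorem dedekind_CB_stmt1 (K : Type) [Field K] (n : ℕ) (S : ZeroDimScheme K n)
    (j : Fin S.s) (sj : (S.pt j).carrier) (hsoc : S.IsSocle j sj) (hsj : sj ≠ 0) :
    (S.alphaY j sj ≤ S.muY j sj ∧ S.muY j sj ≤ S.rX) ∧
    (∀ i : ℕ, i < S.alphaY j sj → S.HFY j sj i = S.HF i) ∧
    (∀ i : ℕ, S.alphaY j sj ≤ i → i < S.muY j sj → S.HFY j sj i + 1 ≤ S.HF i) ∧
    (∀ i : ℕ, S.muY j sj ≤ i → S.HFY j sj i = S.HF i - S.kappa j) := by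
  have htop : ∀ x : S.Gamma, x ∈ S.V S.rX := fun x => by
    rw [S.aux_V_top le_rfl]; trivial
  have hmu : ∀ a, S.mu j a ≤ S.rX := fun a => Nat.sInf_le (htop _)
  have hmem : ∀ a, (Pi.single j a : S.Gamma) ∈ S.V (S.mu j a) := fun a =>
    Nat.sInf_mem (s := {i : ℕ | (Pi.single j a : S.Gamma) ∈ S.V i}) ⟨_, htop _⟩
  have hbdd : BddAbove {m : ℕ | ∃ a : (S.pt j).carrier, a * sj ≠ 0 ∧ m = S.mu j (a * sj)} := by
    refine ⟨S.rX, ?_⟩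
    rintro m ⟨a, -, rfl⟩
    exact hmu _
  have hle : ∀ a, a * sj ≠ 0 → S.mu j (a * sj) ≤ S.muY j sj := fun a ha =>
    le_csSup hbdd ⟨a, ha, rfl⟩
  have hbot : ∀ i, (Pi.single j sj : S.Gamma) ∈ S.V i → S.IY j sj i ≠ ⊥ := by
    intro i hi h
    have h1 : (Pi.single j sj : S.Gamma) ∈ S.IY j sj i :=
      ⟨hi, (S.aux_mem_sep j sj _).2 ⟨1, by rw [one_mul]⟩⟩
    rw [h, Submodule.mem_bot, Pi.single_eq_zero_iff] at h1
    exact hsj h1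
  have hIYle : ∀ i, Module.finrank K (S.IY j sj i) ≤ S.HF i := fun i =>
    Submodule.finrank_mono inf_le_left
  refine ⟨⟨?_, ?_⟩, ?_, ?_, ?_⟩
  · refine le_trans (Nat.sInf_le (hbot _ (hmem sj))) ?_
    have := hle 1 (by rwa [one_mul])
    rwa [one_mul] at this
  · refine csSup_le ⟨_, 1, by rwa [one_mul], rfl⟩ ?_
    rintro m ⟨a, -, rfl⟩
    exact hmu _
  · intro i hi
    have h : S.IY j sj i = ⊥ := by
      by_contra h
      exact Nat.notMem_of_lt_sInf hi h
    rw [ZeroDimScheme.HFY, h, finrank_bot, Nat.sub_zero]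
  · intro i hi _
    have ha : S.IY j sj (S.alphaY j sj) ≠ ⊥ :=
      Nat.sInf_mem (s := {i : ℕ | S.IY j sj i ≠ ⊥}) ⟨_, hbot _ (htop _)⟩
    have hne : S.IY j sj i ≠ ⊥ := fun h =>
      ha (le_bot_iff.1 (h ▸ inf_le_inf_right _ (S.aux_V_mono hi)))
    have h1 : 1 ≤ Module.finrank K (S.IY j sj i) := Submodule.one_le_finrank_iff.2 hne
    have h2 := hIYle i
    rw [ZeroDimScheme.HFY]
    omega
  · intro i hi
    have h : S.IY j sj i = S.sepIdeal j sj := by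
      refine inf_eq_right.2 fun x hx => ?_
      obtain ⟨a, rfl⟩ := (S.aux_mem_sep j sj x).1 hx
      by_cases ha : a * sj = 0
      · rw [ha, Pi.single_zero]
        exact zero_mem _
      · exact S.aux_V_mono ((hle a ha).trans hi) (hmem _)
    rw [ZeroDimScheme.HFY, h, S.aux_finrank_sep j sj hsoc hsj]
end

section
/- Let 𝕏 = {p_1,…,p_s} ⊆ ℙ^n_K be a set of s ≥ 2 distinct K-rational points, none lying on Z(X_0). Then the Hilbert polynomial of the Dedekind different δ_𝕏 is the constant polynomial s, and the regularity index of δ_𝕏 equals 2r_𝕏, i.e. HF_{δ_𝕏}(i) = s for all i ≥ 2r_𝕏 while HF_{δ_𝕏}(2r_𝕏 − 1) < s. -/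
theorem ZeroDimScheme.aux_V_mono_s3 {K : Type} [Field K] {n : ℕ} (S : ZeroDimScheme K n) :
    Monotone S.V := by
  refine monotone_nat_of_le_succ fun i => ?_
  rintro x ⟨F, hF, rfl⟩
  refine ⟨F * MvPolynomial.X 0, ?_, ?_⟩
  · exact MvPolynomial.IsHomogeneous.mul hF (MvPolynomial.isHomogeneous_X K 0)
  · have h := map_mul S.germ F (MvPolynomial.X 0)
    rw [S.germ_X0, mul_one] at h
    exact h

theorem ZeroDimScheme.aux_rX {K : Type} [Field K] {n : ℕ} (S : ZeroDimScheme K n) :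
    ∀ i, S.rX ≤ i → S.V i = ⊤ := by
  have hne : {r : ℕ | ∀ i, r ≤ i → S.HF i = S.degX}.Nonempty := by
    obtain ⟨N, hN⟩ := S.eventually_surj
    refine ⟨N, fun i hi => ?_⟩
    have : S.V i = ⊤ := hN i hi
    unfold ZeroDimScheme.HF ZeroDimScheme.degX
    rw [this]
    exact finrank_top K S.Gamma
  intro i hi
  exact Submodule.eq_top_of_finrank_eq (Nat.sInf_mem hne i hi)

theorem ZeroDimScheme.aux_rX_pred {K : Type} [Field K] {n : ℕ} (S : ZeroDimScheme K n)
    (m : ℕ) (hm : S.rX = m + 1) : S.V m ≠ ⊤ := by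
  intro h
  have : m ∈ {r : ℕ | ∀ i, r ≤ i → S.HF i = S.degX} := by
    intro i hi
    have h2 : S.V i = ⊤ := top_le_iff.1 (h ▸ S.aux_V_mono_s3 hi)
    unfold ZeroDimScheme.HF ZeroDimScheme.degX
    rw [h2]
    exact finrank_top K S.Gamma
  have h3 : S.rX ≤ m := Nat.sInf_le this
  omega

theorem ZeroDimScheme.aux_Ttot {K : Type} [Field K] {n : ℕ} (S : ZeroDimScheme K n)
    (τ : ∀ j, (S.pt j).carrier →ₗ[K] K) (x : S.Gamma) : S.Ttot τ x = ∑ j, τ j (x j) := by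
  simp [ZeroDimScheme.Ttot]

theorem ZeroDimScheme.aux_nondeg {K : Type} [Field K] {n : ℕ} (S : ZeroDimScheme K n)
    (τ : ∀ j, (S.pt j).carrier →ₗ[K] K) (hτ : S.IsTraceFamily τ) (g : S.Gamma)
    (h : ∀ x : S.Gamma, S.Ttot τ (x * g) = 0) : g = 0 := by
  funext j
  refine (hτ j).1 ?_
  ext y
  have := h (Pi.single j y)
  rw [S.aux_Ttot, Finset.sum_eq_single j] at this
  · simpa using this
  · intro k _ hk
    simp [Pi.single_eq_of_ne hk]
  · simp

theorem ZeroDimScheme.aux_mem_Cmod {K : Type} [Field K] {n : ℕ} (S : ZeroDimScheme K n)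
    (τ : ∀ j, (S.pt j).carrier →ₗ[K] K) (k : ℤ) (g : S.Gamma) :
    g ∈ S.Cmod τ k ↔ ∀ i : ℕ, k + (i : ℤ) < 0 → ∀ x ∈ S.V i, S.Ttot τ (g * x) = 0 := by
  simp [ZeroDimScheme.Cmod, Submodule.mem_iInf]

theorem ZeroDimScheme.aux_mem_delta {K : Type} [Field K] {n : ℕ} (S : ZeroDimScheme K n)
    (τ : ∀ j, (S.pt j).carrier →ₗ[K] K) (i : ℤ) (f : S.Gamma) :
    f ∈ S.delta τ i ↔ ∀ k : ℤ, ∀ g ∈ S.Cmod τ k, f * g ∈ S.Vz (i + k) := by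
  simp [ZeroDimScheme.delta, Submodule.mem_iInf]

theorem ZeroDimScheme.aux_exists {K : Type} [Field K] {n : ℕ} (S : ZeroDimScheme K n)
    (τ : ∀ j, (S.pt j).carrier →ₗ[K] K) (hτ : S.IsTraceFamily τ) (W : Submodule K S.Gamma)
    (hW : W ≠ ⊤) : ∃ g : S.Gamma, g ≠ 0 ∧ ∀ x ∈ W, S.Ttot τ (g * x) = 0 := by
  obtain ⟨φ, hφ, hle⟩ := Submodule.exists_le_ker_of_lt_top W (lt_top_iff_ne_top.2 hW)
  choose g hg using fun j => (hτ j).2 (φ.comp (LinearMap.single K (fun j => (S.pt j).carrier) j))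
  have key : ∀ x : S.Gamma, S.Ttot τ (g * x) = φ x := by
    intro x
    rw [S.aux_Ttot]
    conv_rhs => rw [← Finset.univ_sum_single x, map_sum]
    refine Finset.sum_congr rfl fun j _ => ?_
    have := LinearMap.congr_fun (hg j) (x j)
    simp only [LinearMap.comp_apply, LinearMap.mulRight_apply, LinearMap.single_apply] at this
    rw [Pi.mul_apply, mul_comm, this]
  refine ⟨g, ?_, fun x hx => (key x).trans (hle hx)⟩
  rintro rfl
  apply hφ
  refine LinearMap.ext fun y => ?_
  rw [← key]
  simp

theorem ZeroDimScheme.aux_finrank {K : Type} [Field K] {n : ℕ} (S : ZeroDimScheme K n)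
    (hrat : ∀ j, Module.finrank K (S.pt j).carrier = 1) : Module.finrank K S.Gamma = S.s := by
  rw [Module.finrank_pi_fintype]
  simp [hrat]

theorem ZeroDimScheme.aux_reduced {K : Type} [Field K] {n : ℕ} (S : ZeroDimScheme K n)
    (hrat : ∀ j, Module.finrank K (S.pt j).carrier = 1) (g : S.Gamma) (h : g * g = 0) :
    g = 0 := by
  funext j
  obtain ⟨c, hc⟩ := exists_smul_eq_of_finrank_eq_one (hrat j)
    (one_ne_zero : (1 : (S.pt j).carrier) ≠ 0) (g j)
  have h1 : g j * g j = 0 := congrFun h j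
  rw [← hc] at h1 ⊢
  rw [smul_mul_smul_comm, mul_one, smul_eq_zero] at h1
  rcases h1 with h1 | h1
  · rw [mul_self_eq_zero.1 h1, zero_smul]; rfl
  · exact absurd h1 one_ne_zero

/-- Corollary 3.6 of Section 3 / Corollary after Prop. 2.5.  Let
`𝕏 = {p_1, …, p_s} ⊆ ℙⁿ_K` be a set of `s ≥ 2` distinct `K`-rational points
(i.e. every `𝒪_{𝕏,p_j}` is one-dimensional over `K`), none on `Z(X₀)`, and let `δ_𝕏`
be the Dedekind different with respect to the canonical trace map (the trace family
with `τ_j(1) = 1`).  Then the Hilbert polynomial of `δ_𝕏` is the constant polynomial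
`s` and the regularity index of `δ_𝕏` equals `2 r_𝕏`, i.e. `HF_{δ_𝕏}(i) = s` for all
`i ≥ 2 r_𝕏` while `HF_{δ_𝕏}(2 r_𝕏 - 1) < s`. -/
theorem dedekind_CB_stmt3 (K : Type) [Field K] (n : ℕ) (S : ZeroDimScheme K n)
    (hs : 2 ≤ S.s)
    (hrat : ∀ j, Module.finrank K (S.pt j).carrier = 1)
    (τ : ∀ j, (S.pt j).carrier →ₗ[K] K) (hτ : S.IsTraceFamily τ)
    (hτ1 : ∀ j, τ j 1 = 1) :
    (∀ i : ℤ, 2 * (S.rX : ℤ) ≤ i → S.HFdelta τ i = S.s) ∧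
    S.HFdelta τ (2 * (S.rX : ℤ) - 1) < S.s := by
  have hfr := S.aux_finrank hrat
  refine ⟨fun i hi => ?_, ?_⟩
  · have htop : S.delta τ i = ⊤ := by
      rw [eq_top_iff]
      intro f _
      rw [S.aux_mem_delta]
      intro k g hg
      rw [S.aux_mem_Cmod] at hg
      by_cases hk : k + (S.rX : ℤ) < 0
      · have : g = 0 := S.aux_nondeg τ hτ g fun x => by
          rw [mul_comm]
          exact hg S.rX hk x (by rw [S.aux_rX _ le_rfl]; trivial)
        rw [this, mul_zero]
        exact Submodule.zero_mem _
      · unfold ZeroDimScheme.Vz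
        rw [if_pos (by omega), S.aux_rX _ (by omega)]
        trivial
    unfold ZeroDimScheme.HFdelta
    rw [htop]
    exact (finrank_top K S.Gamma).trans hfr
  · unfold ZeroDimScheme.HFdelta
    refine lt_of_lt_of_eq (Submodule.finrank_lt ?_) hfr
    intro htop
    have hall : ∀ f : S.Gamma, ∀ k : ℤ, ∀ g ∈ S.Cmod τ k,
        f * g ∈ S.Vz (2 * (S.rX : ℤ) - 1 + k) := fun f =>
      (S.aux_mem_delta τ _ f).1 (by rw [htop]; trivial)
    rcases Nat.eq_zero_or_eq_succ_pred S.rX with h0 | h1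
    · have h := hall 1 0 1 ((S.aux_mem_Cmod τ _ _).2 fun i hi => by omega)
      unfold ZeroDimScheme.Vz at h
      rw [if_neg (by omega), Submodule.mem_bot, mul_one] at h
      exact one_ne_zero (congrFun h ⟨0, S.spos⟩)
    · generalize S.rX.pred = m at h1
      replace h1 : S.rX = m + 1 := h1
      obtain ⟨g, hg0, hg⟩ := S.aux_exists τ hτ (S.V m) (S.aux_rX_pred m h1)
      have hgC : g ∈ S.Cmod τ (-(S.rX : ℤ)) := (S.aux_mem_Cmod τ _ _).2 fun i hi x hx =>
        hg x (S.aux_V_mono_s3 (by omega) hx)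
      apply hg0
      apply S.aux_reduced hrat
      apply S.aux_nondeg τ hτ
      intro x
      have h := hall x _ g hgC
      unfold ZeroDimScheme.Vz at h
      rw [if_pos (by omega), show (2 * (S.rX : ℤ) - 1 + -(S.rX : ℤ)).toNat = m by omega] at h
      have h2 := hg _ h
      rwa [mul_left_comm] at h2
end

section
/- Let 𝕏 = {p_1,…,p_s} ⊆ ℙ^2_K be a set of s distinct K-rational points, none lying on Z(X_0). If 𝕏 has minimal Dedekind different, then the Dedekind different equals the Kähler different: δ_𝕏 = ϑ_𝕏. -/
namespace ZeroDimScheme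

open MvPolynomial

section helpers

variable {K : Type} [Field K] (S : ZeroDimScheme K 2)

/-- Ideal of polynomials all of whose homogeneous components have germs in `W`. -/
noncomputable def compIdeal (W : ℕ → Submodule K S.Gamma)
    (hW : ∀ d i, ∀ x, ∀ w ∈ W i, x * w ∈ W (d + i)) : Ideal (MvPolynomial (Fin 3) K) where
  carrier := {f | ∀ i, S.germ (homogeneousComponent i f) ∈ W i}
  add_mem' := by
    intro a b ha hb i
    rw [map_add, map_add]
    exact (W i).add_mem (ha i) (hb i)
  zero_mem' := by
    intro i
    rw [map_zero, map_zero]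
    exact (W i).zero_mem
  smul_mem' := by
    intro h f hf i
    have e : h • f = ∑ d ∈ Finset.range (h.totalDegree + 1),
        ∑ e ∈ Finset.range (f.totalDegree + 1),
          homogeneousComponent d h * homogeneousComponent e f := by
      rw [← Finset.sum_mul_sum, sum_homogeneousComponent, sum_homogeneousComponent, smul_eq_mul]
    rw [e, map_sum, map_sum]
    refine Submodule.sum_mem _ fun d _ => ?_
    rw [map_sum, map_sum]
    refine Submodule.sum_mem _ fun e _ => ?_
    have hm : homogeneousComponent d h * homogeneousComponent e f ∈
        homogeneousSubmodule (Fin 3) K (d + e) :=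
      (homogeneousComponent_isHomogeneous d h).mul (homogeneousComponent_isHomogeneous e f)
    rw [homogeneousComponent_of_mem hm]
    split_ifs with hh
    · rw [hh, map_mul]
      exact hW _ _ _ _ (hf e)
    · rw [map_zero]
      exact (W i).zero_mem

lemma IX_comp {F : MvPolynomial (Fin 3) K} (hF : F ∈ S.IX) (i : ℕ) :
    S.germ (homogeneousComponent i F) = 0 := by
  have h : S.IX ≤ S.compIdeal (fun _ => ⊥) (by
      intro d i x w hw
      rw [Submodule.mem_bot] at hw ⊢
      rw [hw, mul_zero]) := by
    refine Ideal.span_le.2 ?_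
    rintro G ⟨⟨d, hd⟩, hG⟩ j
    rw [homogeneousComponent_of_mem hd]
    split_ifs
    · rw [Submodule.mem_bot, hG]
    · rw [map_zero]
      exact Submodule.zero_mem _
  exact (Submodule.mem_bot K).1 (h hF i)

lemma V_top (i : ℕ) (hi : S.rX ≤ i) : S.V i = ⊤ := by
  have hne : {r : ℕ | ∀ i, r ≤ i → S.HF i = S.degX}.Nonempty := by
    obtain ⟨N, hN⟩ := S.eventually_surj
    refine ⟨N, fun i hi => ?_⟩
    have : S.V i = ⊤ := hN i hi
    rw [HF, this, degX, finrank_top]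
  exact Submodule.eq_top_of_finrank_eq (Nat.sInf_mem hne i hi)

lemma V_mono {p q : ℕ} (h : p ≤ q) : S.V p ≤ S.V q := by
  rintro _ ⟨F, hF, rfl⟩
  refine ⟨X 0 ^ (q - p) * F, ?_, ?_⟩
  · have := ((isHomogeneous_X_pow (R := K) (0 : Fin 3) (q - p))).mul hF
    rw [Nat.sub_add_cancel h] at this
    exact this
  · simp [S.germ_X0]

lemma V_mul {p q : ℕ} {x y : S.Gamma} (hx : x ∈ S.V p) (hy : y ∈ S.V q) :
    x * y ∈ S.V (p + q) := by
  obtain ⟨F, hF, rfl⟩ := hx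
  obtain ⟨G, hG, rfl⟩ := hy
  exact ⟨F * G, IsHomogeneous.mul hF hG, by simp⟩

lemma one_mem_V : (1 : S.Gamma) ∈ S.V 0 := ⟨1, isHomogeneous_one _ _, by simp⟩

variable (τ : ∀ j, (S.pt j).carrier →ₗ[K] K)

lemma tau_smul (hrat : ∀ j, Module.finrank K (S.pt j).carrier = 1) (hτ1 : ∀ j, τ j 1 = 1)
    (j) (x : (S.pt j).carrier) : τ j x • (1 : (S.pt j).carrier) = x := by
  obtain ⟨c, rfl⟩ := (finrank_eq_one_iff_of_nonzero' (1 : (S.pt j).carrier) one_ne_zero).1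
    (hrat j) x
  simp [hτ1]

/-- the trace as an algebra homomorphism -/
noncomputable def tauHom (hrat : ∀ j, Module.finrank K (S.pt j).carrier = 1)
    (hτ1 : ∀ j, τ j 1 = 1) (j) : (S.pt j).carrier →ₐ[K] K :=
  AlgHom.ofLinearMap (τ j) (hτ1 j) (by
    intro x y
    rw [← S.tau_smul τ hrat hτ1 j x, ← S.tau_smul τ hrat hτ1 j y]
    simp [hτ1, mul_comm])

/-- span of tensors -/
noncomputable def Esp (c N : ℕ) : Submodule K (Fin S.s → Fin S.s → K) :=
  Submodule.span K {M | ∃ p q, ∃ U ∈ S.V p, ∃ U' ∈ S.V q, p + q + c = N ∧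
    M = fun k l => τ k (U k) * τ l (U' l)}

variable (hrat : ∀ j, Module.finrank K (S.pt j).carrier = 1) (hτ1 : ∀ j, τ j 1 = 1)

include hrat hτ1

lemma tau_mul (j) (x y : (S.pt j).carrier) : τ j (x * y) = τ j x * τ j y :=
  map_mul (S.tauHom τ hrat hτ1 j) x y

lemma tau_inj (j) {x y : (S.pt j).carrier} (h : τ j x = τ j y) : x = y := by
  rw [← S.tau_smul τ hrat hτ1 j x, h, S.tau_smul τ hrat hτ1 j y]

lemma Esp_mul {c N c' N' : ℕ} {M M' : Fin S.s → Fin S.s → K} (hM : M ∈ S.Esp τ c N)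
    (hM' : M' ∈ S.Esp τ c' N') : M * M' ∈ S.Esp τ (c + c') (N + N') := by
  have h : S.Esp τ c N * S.Esp τ c' N' ≤ S.Esp τ (c + c') (N + N') := by
    rw [Esp, Esp, Submodule.span_mul_span]
    refine Submodule.span_le.2 ?_
    rintro _ ⟨_, ⟨p, q, U, hU, U', hU', e, rfl⟩, _, ⟨p2, q2, U2, hU2, U2', hU2', e2, rfl⟩, rfl⟩
    refine Submodule.subset_span ⟨p + p2, q + q2, U * U2, S.V_mul hU hU2, U' * U2',
      S.V_mul hU' hU2', by omega, ?_⟩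
    funext k l
    simp only [Pi.mul_apply, S.tau_mul τ hrat hτ1]
    ring
  exact h (Submodule.mul_mem_mul hM hM')

/-- evaluation at the `j`-th point -/
noncomputable def ev (j : Fin S.s) : MvPolynomial (Fin 3) K →ₐ[K] K :=
  ((S.tauHom τ hrat hτ1 j).comp (Pi.evalAlgHom K (fun j => (S.pt j).carrier) j)).comp S.germ

lemma ev_apply (j : Fin S.s) (F : MvPolynomial (Fin 3) K) :
    S.ev τ hrat hτ1 j F = τ j (S.germ F j) := rfl

lemma ev_X0 (j : Fin S.s) : S.ev τ hrat hτ1 j (X 0) = 1 := by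
  rw [ev_apply, S.germ_X0]; exact hτ1 j

/-- divided differences exist -/
def DD (a : ℕ) (F : MvPolynomial (Fin 3) K) : Prop :=
  ∃ F1 ∈ S.Esp τ 1 a, ∃ F2 ∈ S.Esp τ 1 a,
    (∀ k l, S.ev τ hrat hτ1 k F - S.ev τ hrat hτ1 l F =
      (S.ev τ hrat hτ1 k (X 1) - S.ev τ hrat hτ1 l (X 1)) * F1 k l +
      (S.ev τ hrat hτ1 k (X 2) - S.ev τ hrat hτ1 l (X 2)) * F2 k l) ∧
    (∀ k, F1 k k = S.ev τ hrat hτ1 k (pderiv 1 F)) ∧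
    (∀ k, F2 k k = S.ev τ hrat hτ1 k (pderiv 2 F))

lemma DD_zero (a : ℕ) : S.DD τ hrat hτ1 a 0 :=
  ⟨0, Submodule.zero_mem _, 0, Submodule.zero_mem _, by simp, by simp, by simp⟩

lemma DD_add (a : ℕ) (F G) (hF : S.DD τ hrat hτ1 a F) (hG : S.DD τ hrat hτ1 a G) :
    S.DD τ hrat hτ1 a (F + G) := by
  obtain ⟨F1, h1, F2, h2, h3, h4, h5⟩ := hF
  obtain ⟨G1, g1, G2, g2, g3, g4, g5⟩ := hG
  refine ⟨F1 + G1, Submodule.add_mem _ h1 g1, F2 + G2, Submodule.add_mem _ h2 g2, ?_, ?_, ?_⟩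
  · intro k l
    simp only [map_add, Pi.add_apply]
    linear_combination h3 k l + g3 k l
  · intro k; simp [h4, g4]
  · intro k; simp [h5, g5]

lemma tens_left {a : ℕ} {F : MvPolynomial (Fin 3) K} (hF : F.IsHomogeneous a) :
    (fun k _ => S.ev τ hrat hτ1 k F) ∈ S.Esp τ 1 (a + 1) := by
  refine Submodule.subset_span ⟨a, 0, S.germ F, ⟨F, hF, rfl⟩, 1, S.one_mem_V, by omega, ?_⟩
  funext k l
  simp [ev_apply, hτ1]

lemma tens_right {a : ℕ} {F : MvPolynomial (Fin 3) K} (hF : F.IsHomogeneous a) :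
    (fun _ l => S.ev τ hrat hτ1 l F) ∈ S.Esp τ 0 a := by
  refine Submodule.subset_span ⟨0, a, 1, S.one_mem_V, S.germ F, ⟨F, hF, rfl⟩, by omega, ?_⟩
  funext k l
  simp [ev_apply, hτ1]

lemma DD_mul_X (a : ℕ) (F) (hFa : F.IsHomogeneous a) (hF : S.DD τ hrat hτ1 a F) (i : Fin 3) :
    S.DD τ hrat hτ1 (a + 1) (F * X i) := by
  obtain ⟨F1, h1, F2, h2, h3, h4, h5⟩ := hF
  have hl := S.tens_left τ hrat hτ1 hFa
  have hr := S.tens_right τ hrat hτ1 (isHomogeneous_X K i)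
  have m1 := S.Esp_mul τ hrat hτ1 hr h1
  have m2 := S.Esp_mul τ hrat hτ1 hr h2
  rw [zero_add, add_comm 1 a] at m1 m2
  refine ⟨_, Submodule.add_mem _ (Submodule.smul_mem _ (if i = 1 then 1 else 0 : K) hl) m1,
    _, Submodule.add_mem _ (Submodule.smul_mem _ (if i = 2 then 1 else 0 : K) hl) m2, ?_, ?_, ?_⟩
  · intro k l
    have := h3 k l
    simp only [map_mul, Pi.add_apply, Pi.smul_apply, Pi.mul_apply, smul_eq_mul]
    fin_cases i
    · simp [S.ev_X0 τ hrat hτ1, this]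
    · simp
      linear_combination S.ev τ hrat hτ1 l (X 1) * this
    · simp
      linear_combination S.ev τ hrat hτ1 l (X 2) * this
  · intro k
    simp only [Pi.add_apply, Pi.smul_apply, Pi.mul_apply, smul_eq_mul, h4, pderiv_mul, map_add,
      map_mul, pderiv_X, Pi.single_apply]
    fin_cases i <;> simp <;> ring
  · intro k
    simp only [Pi.add_apply, Pi.smul_apply, Pi.mul_apply, smul_eq_mul, h5, pderiv_mul, map_add,
      map_mul, pderiv_X, Pi.single_apply]
    fin_cases i <;> simp <;> ring

lemma DD_monomial (m : Fin 3 →₀ ℕ) (c : K) : S.DD τ hrat hτ1 m.degree (monomial m c) := by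
  have key : ∀ f : MvPolynomial (Fin 3) K, (∃ m c, f = monomial m c) →
      ∃ a, f.IsHomogeneous a ∧ S.DD τ hrat hτ1 a f := by
    rintro f ⟨m, c, rfl⟩
    refine induction_on_monomial
      (motive := fun f => ∃ a, f.IsHomogeneous a ∧ S.DD τ hrat hτ1 a f) ?_ ?_ m c
    · intro c
      refine ⟨0, isHomogeneous_C _ _, 0, Submodule.zero_mem _, 0, Submodule.zero_mem _, ?_, ?_, ?_⟩
      · intro k l
        rw [← algebraMap_eq, AlgHom.commutes, AlgHom.commutes]
        simp
      · simp
      · simp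
    · rintro p i ⟨a, ha, h⟩
      exact ⟨a + 1, ha.mul (isHomogeneous_X _ _), S.DD_mul_X τ hrat hτ1 a p ha h i⟩
  by_cases hc : c = 0
  · rw [hc, monomial_zero]; exact S.DD_zero τ hrat hτ1 _
  obtain ⟨a, ha, h⟩ := key _ ⟨m, c, rfl⟩
  have e := IsHomogeneous.inj_right ha (isHomogeneous_monomial (d := m) c rfl) (by simpa using hc)
  rwa [e] at h

lemma DD_homog {a : ℕ} {F : MvPolynomial (Fin 3) K} (hF : F.IsHomogeneous a) :
    S.DD τ hrat hτ1 a F := by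
  rw [F.as_sum]
  refine Finset.sum_induction _ _ (S.DD_add τ hrat hτ1 a) (S.DD_zero τ hrat hτ1 a) ?_
  intro m hm
  have : m.degree = a := by
    rw [Finsupp.degree_eq_weight_one]
    exact hF (mem_support_iff.1 hm)
  rw [← this]
  exact S.DD_monomial τ hrat hτ1 m _

lemma pts_ne {k l : Fin S.s} (h : k ≠ l) :
    S.ev τ hrat hτ1 k (X 1) - S.ev τ hrat hτ1 l (X 1) ≠ 0 ∨
    S.ev τ hrat hτ1 k (X 2) - S.ev τ hrat hτ1 l (X 2) ≠ 0 := by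
  by_contra! hh
  have e : S.ev τ hrat hτ1 k = S.ev τ hrat hτ1 l := by
    apply MvPolynomial.algHom_ext
    intro i
    fin_cases i
    · exact (S.ev_X0 τ hrat hτ1 k).trans (S.ev_X0 τ hrat hτ1 l).symm
    · exact sub_eq_zero.1 hh.1
    · exact sub_eq_zero.1 hh.2
  have ht : (Pi.single k 1 : S.Gamma) ∈ S.V S.rX := by
    rw [S.V_top _ le_rfl]; trivial
  obtain ⟨F, -, hF⟩ := ht
  have hF' : S.germ F = Pi.single k 1 := hF
  have := DFunLike.congr_fun e F
  rw [ev_apply, ev_apply, hF', Pi.single_eq_same, Pi.single_eq_of_ne h.symm, hτ1, map_zero] at this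
  exact one_ne_zero this

lemma minor_delta {a b : ℕ} {F G : MvPolynomial (Fin 3) K} (hF : F.IsHomogeneous a)
    (hG : G.IsHomogeneous b) (hF0 : S.germ F = 0) (hG0 : S.germ G = 0) (i : ℤ)
    (hi : i + 2 = a + b) :
    S.germ (pderiv 1 F * pderiv 2 G - pderiv 2 F * pderiv 1 G) ∈ S.delta τ i := by
  obtain ⟨F1, h1, F2, h2, h3, h4, h5⟩ := S.DD_homog τ hrat hτ1 hF
  obtain ⟨G1, g1, G2, g2, g3, g4, g5⟩ := S.DD_homog τ hrat hτ1 hG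
  set J := pderiv 1 F * pderiv 2 G - pderiv 2 F * pderiv 1 G with hJ
  have hD : F1 * G2 - F2 * G1 ∈ S.Esp τ (1 + 1) (a + b) :=
    Submodule.sub_mem _ (S.Esp_mul τ hrat hτ1 h1 g2) (S.Esp_mul τ hrat hτ1 h2 g1)
  have hoff : ∀ k l, k ≠ l → (F1 * G2 - F2 * G1) k l = 0 := by
    intro k l hkl
    have e1 := h3 k l
    have e2 := g3 k l
    simp only [ev_apply, hF0, hG0, Pi.zero_apply, map_zero, sub_zero] at e1 e2
    have hne := S.pts_ne τ hrat hτ1 hkl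
    simp only [ev_apply] at hne
    simp only [Pi.sub_apply, Pi.mul_apply]
    rcases hne with hne | hne
    · refine (mul_eq_zero.1 ?_).resolve_left hne
      linear_combination (-G2 k l) * e1 + F2 k l * e2
    · refine (mul_eq_zero.1 ?_).resolve_left hne
      linear_combination (G1 k l) * e1 - F1 k l * e2
  have hdiag : ∀ k, (F1 * G2 - F2 * G1) k k = τ k (S.germ J k) := by
    intro k
    rw [← S.ev_apply τ hrat hτ1, hJ]
    simp only [Pi.sub_apply, Pi.mul_apply, h4, h5, g4, g5, map_sub, map_mul]
  unfold delta
  simp only [Submodule.mem_iInf, Submodule.mem_comap, LinearMap.mulRight_apply]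
  intro k g hg
  have hg' : ∀ q : ℕ, k + (q : ℤ) < 0 → ∀ U ∈ S.V q, ∑ l, τ l (g l) * τ l (U l) = 0 := by
    intro q hq U hU
    unfold Cmod at hg
    simp only [Submodule.mem_iInf, LinearMap.mem_ker] at hg
    have := hg q hq U hU
    simpa [Ttot, S.tau_mul τ hrat hτ1] using this
  have key : ∀ M ∈ S.Esp τ (1 + 1) (a + b),
      (fun j => (∑ l, M j l * τ l (g l)) • (1 : (S.pt j).carrier) : S.Gamma) ∈ S.Vz (i + k) := by
    intro M hM
    refine Submodule.span_induction ?_ ?_ ?_ ?_ hM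
    · rintro _ ⟨p, q, U, hU, U', hU', e, rfl⟩
      have e1 : (fun j => (∑ l, τ j (U j) * τ l (U' l) * τ l (g l)) • (1 : (S.pt j).carrier)
          : S.Gamma) = (∑ l, τ l (g l) * τ l (U' l)) • U := by
        funext j
        apply S.tau_inj τ hrat hτ1
        simp only [map_smul, hτ1, Pi.smul_apply, smul_eq_mul, mul_one, Finset.sum_mul]
        exact Finset.sum_congr rfl fun l _ => by ring
      simp only [e1]
      by_cases hq : k + (q : ℤ) < 0
      · rw [hg' q hq U' hU', zero_smul]; exact Submodule.zero_mem _
      · refine Submodule.smul_mem _ _ ?_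
        have h0 : 0 ≤ i + k := by omega
        rw [Vz, if_pos h0]
        exact S.V_mono (by omega) hU
    · convert Submodule.zero_mem (S.Vz (i + k)) using 1
      funext j; simp
    · intro x y _ _ hx hy
      convert Submodule.add_mem _ hx hy using 1
      funext j
      simp [add_mul, Finset.sum_add_distrib, add_smul]
    · intro c x _ hx
      convert Submodule.smul_mem _ c hx using 1
      funext j
      simp [Finset.mul_sum, mul_assoc, smul_smul, Finset.sum_smul, Finset.smul_sum]
  convert key _ hD using 1
  funext j
  rw [Finset.sum_eq_single j (fun l _ hl => by rw [hoff j l hl.symm, zero_mul]) (by simp), hdiag,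
    ← S.tau_mul τ hrat hτ1, S.tau_smul τ hrat hτ1]
  rfl

lemma jac_eq (Fs : Fin 2 → MvPolynomial (Fin 3) K) :
    jacMinor Fs = pderiv 1 (Fs 0) * pderiv 2 (Fs 1) - pderiv 2 (Fs 0) * pderiv 1 (Fs 1) := by
  rw [jacMinor, Matrix.det_fin_two]
  rfl

lemma theta_le (hmin : S.MinimalDedekind τ) (i : ℕ) (hi : i < 2 * S.rX) : S.thetaPiece i = ⊥ := by
  let W : ℕ → Submodule K S.Gamma := fun i => if 2 * S.rX ≤ i then ⊤ else ⊥
  have hW : ∀ d i, ∀ x, ∀ w ∈ W i, x * w ∈ W (d + i) := by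
    intro d i x w hw
    by_cases h : 2 * S.rX ≤ i
    · have : W (d + i) = ⊤ := if_pos (by omega)
      rw [this]; trivial
    · have : W i = ⊥ := if_neg h
      rw [this, Submodule.mem_bot] at hw
      rw [hw, mul_zero]; exact Submodule.zero_mem _
  have hWd : ∀ i : ℕ, S.delta τ i = W i := by
    intro i
    rw [hmin i]
    by_cases h : 2 * S.rX ≤ i
    · rw [if_pos (by exact_mod_cast h)]; exact (if_pos h).symm
    · rw [if_neg (by exact_mod_cast h)]; exact (if_neg h).symm
  have hle : S.KaehlerIdeal ≤ S.compIdeal W hW := by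
    refine sup_le ?_ (Ideal.span_le.2 ?_)
    · intro F hF i
      rw [S.IX_comp hF]; exact Submodule.zero_mem _
    · rintro _ ⟨Fs, hFs, rfl⟩
      rw [S.jac_eq τ hrat hτ1]
      have e : pderiv 1 (Fs 0) * pderiv 2 (Fs 1) - pderiv 2 (Fs 0) * pderiv 1 (Fs 1) =
          ∑ a ∈ Finset.range ((Fs 0).totalDegree + 1),
          ∑ b ∈ Finset.range ((Fs 1).totalDegree + 1),
          (pderiv 1 (homogeneousComponent a (Fs 0)) * pderiv 2 (homogeneousComponent b (Fs 1)) -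
           pderiv 2 (homogeneousComponent a (Fs 0)) * pderiv 1 (homogeneousComponent b (Fs 1))) := by
        simp only [Finset.sum_sub_distrib, ← Finset.sum_mul_sum, ← map_sum,
          sum_homogeneousComponent]
      rw [e]
      refine Ideal.sum_mem _ fun a _ => Ideal.sum_mem _ fun b _ => ?_
      have hA := homogeneousComponent_isHomogeneous a (Fs 0)
      have hB := homogeneousComponent_isHomogeneous b (Fs 1)
      rcases Nat.eq_zero_or_pos a with ha | ha
      · rw [ha, homogeneousComponent_zero]
        simp
      rcases Nat.eq_zero_or_pos b with hb | hb
      · rw [hb, homogeneousComponent_zero]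
        simp
      intro i
      have hm : (pderiv 1 (homogeneousComponent a (Fs 0)) *
            pderiv 2 (homogeneousComponent b (Fs 1)) -
           pderiv 2 (homogeneousComponent a (Fs 0)) * pderiv 1 (homogeneousComponent b (Fs 1)))
           ∈ homogeneousSubmodule (Fin 3) K ((a - 1) + (b - 1)) :=
        Submodule.sub_mem _ (hA.pderiv.mul hB.pderiv) (hA.pderiv.mul hB.pderiv)
      rw [homogeneousComponent_of_mem hm]
      split_ifs with hh
      · rw [hh, ← hWd]
        exact S.minor_delta τ hrat hτ1 hA hB (S.IX_comp (hFs 0) a) (S.IX_comp (hFs 1) b) _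
          (by omega)
      · rw [map_zero]; exact Submodule.zero_mem _
  rw [eq_bot_iff]
  rintro _ ⟨F, ⟨hF, hFi⟩, rfl⟩
  have := hle hF i
  rw [homogeneousComponent_of_mem hFi, if_pos rfl] at this
  have hb : W i = ⊥ := if_neg (by omega)
  rw [hb] at this
  exact this

lemma theta_top (i : ℕ) (hi : 2 * S.rX ≤ i) : S.thetaPiece i = ⊤ := by
  have hs : ∀ j, (Pi.single j 1 : S.Gamma) ∈ S.thetaPiece i := by
    intro j
    have ht : (Pi.single j 1 : S.Gamma) ∈ S.V S.rX := by
      rw [S.V_top _ le_rfl]; trivial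
    obtain ⟨f, hf, hfj⟩ := ht
    have hfj' : S.germ f = Pi.single j 1 := hfj
    let L : Fin 3 → MvPolynomial (Fin 3) K := fun c => X c - C (S.ev τ hrat hτ1 j (X c)) * X 0
    have hL : ∀ c, (L c).IsHomogeneous 1 := fun c =>
      (isHomogeneous_X _ _).sub (isHomogeneous_C_mul_X _ _)
    have hLj : ∀ c, S.ev τ hrat hτ1 j (L c) = 0 := by
      intro c
      simp only [L, map_sub, map_mul, S.ev_X0 τ hrat hτ1, ← algebraMap_eq, AlgHom.commutes]
      simp
    have hfk : ∀ k, k ≠ j → S.ev τ hrat hτ1 k f = 0 := by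
      intro k hk
      rw [ev_apply, hfj', Pi.single_eq_of_ne hk, map_zero]
    have hfjj : S.ev τ hrat hτ1 j f = 1 := by
      rw [ev_apply, hfj', Pi.single_eq_same, hτ1]
    have hH : ∀ c, (L c * f).IsHomogeneous (1 + S.rX) := fun c => (hL c).mul hf
    have hI : ∀ c, L c * f ∈ S.IX := by
      intro c
      refine Ideal.subset_span ⟨⟨_, hH c⟩, ?_⟩
      funext k
      apply S.tau_inj τ hrat hτ1
      rw [← S.ev_apply τ hrat hτ1, map_mul, Pi.zero_apply, map_zero]
      by_cases hk : k = j
      · rw [hk, hLj, zero_mul]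
      · rw [hfk k hk, mul_zero]
    have hm : jacMinor ![L 1 * f, L 2 * f] = f * (f + L 1 * pderiv 1 f + L 2 * pderiv 2 f) := by
      rw [S.jac_eq τ hrat hτ1]
      simp [L, pderiv_mul, pderiv_X, Pi.single_apply]
      ring
    have hmh : (jacMinor ![L 1 * f, L 2 * f]).IsHomogeneous (2 * S.rX) := by
      rw [S.jac_eq τ hrat hτ1]
      have e : 2 * S.rX = (1 + S.rX - 1) + (1 + S.rX - 1) := by omega
      rw [e]
      exact ((hH 1).pderiv.mul (hH 2).pderiv).sub ((hH 1).pderiv.mul (hH 2).pderiv)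
    refine ⟨X 0 ^ (i - 2 * S.rX) * jacMinor ![L 1 * f, L 2 * f], ⟨?_, ?_⟩, ?_⟩
    · refine Ideal.mul_mem_left _ _ (Ideal.mem_sup_right (Ideal.subset_span ⟨_, ?_, rfl⟩))
      intro a
      fin_cases a
      · exact hI 1
      · exact hI 2
    · have := (isHomogeneous_X_pow (R := K) (0 : Fin 3) (i - 2 * S.rX)).mul hmh
      rw [Nat.sub_add_cancel hi] at this
      exact this
    · funext k
      apply S.tau_inj τ hrat hτ1
      change S.ev τ hrat hτ1 k _ = _
      rw [map_mul, map_pow, S.ev_X0 τ hrat hτ1, one_pow, one_mul, hm]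
      simp only [map_mul, map_add]
      by_cases hk : k = j
      · subst hk
        rw [hLj, hLj, hfjj, Pi.single_eq_same, hτ1]; ring
      · rw [hfk k hk, Pi.single_eq_of_ne hk, map_zero, zero_mul]
  rw [eq_top_iff]
  intro x _
  have hx : x = ∑ j, τ j (x j) • (Pi.single j 1 : S.Gamma) := by
    conv_lhs => rw [← Finset.univ_sum_single x]
    refine Finset.sum_congr rfl fun j _ => ?_
    rw [← Pi.single_smul, S.tau_smul τ hrat hτ1]
  rw [hx]
  exact Submodule.sum_mem _ fun j _ => Submodule.smul_mem _ _ (hs j)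

end helpers

end ZeroDimScheme

/-- Corollary 2.8.  Let `𝕏 = {p_1, …, p_s} ⊆ ℙ²_K` be a set of
distinct `K`-rational points, none on `Z(X₀)`, with Dedekind different `δ_𝕏` taken
with respect to the canonical trace map.  If `𝕏` has minimal Dedekind different, then
the Dedekind different equals the Kähler different: `δ_𝕏 = ϑ_𝕏` (degreewise, as
homogeneous ideals of `R`). -/
theorem dedekind_CB_stmt4 (K : Type) [Field K] (S : ZeroDimScheme K 2)
    (hrat : ∀ j, Module.finrank K (S.pt j).carrier = 1)
    (τ : ∀ j, (S.pt j).carrier →ₗ[K] K) (hτ : S.IsTraceFamily τ)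
    (hτ1 : ∀ j, τ j 1 = 1)
    (hmin : S.MinimalDedekind τ) :
    ∀ i : ℕ, S.delta τ i = S.thetaPiece i := by
  intro i
  rw [hmin i]
  by_cases h : 2 * S.rX ≤ i
  · rw [if_pos (by exact_mod_cast h), S.theta_top τ hrat hτ1 i h]
  · rw [if_neg (by exact_mod_cast h), S.theta_le τ hrat hτ1 hmin i (by omega)]
end
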